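/- Let (Ω, μ) and (Δ, ν) be measure spaces, let X be a Banach space over 𝕜 (= ℝ or ℂ), let {f_α}_{α∈Ω} and {g_β}_{β∈Δ} be families of (not necessarily bounded) linear functionals on X, and let {τ_α}_{α∈Ω} ⊆ X and {ω_β}_{β∈Δ} ⊆ X. Fix x ∈ X and positive real constants A, B with |f_α(ω_β)| ≤ A and |g_β(τ_α)| ≤ B for all α ∈ Ω, β ∈ Δ. Assume: (i) the map α ↦ f_α(x) is integrable on (Ω, μ) with ∫_Ω |f_α(x)| dμ(α) > 0, and the map β ↦ g_β(x) is integrable on (Δ, ν) with ∫_Δ |g_β(x)| dν(β) > 0; (ii) for every α ∈ Ω, the map β ↦ g_β(x) f_α(ω_β) is integrable on (Δ, ν) and f_α(x) = ∫_Δ g_β(x) f_α(ω_β) dν(β); (iii) for every β ∈ Δ, the map α ↦ f_α(x) g_β(τ_α) is integrable on (Ω, μ) and g_β(x) = ∫_Ω f_α(x) g_β(τ_α) dμ(α). Then, in the extended nonnegative reals, μ({α ∈ Ω : f_α(x) ≠ 0}) · ν({β ∈ Δ : g_β(x) ≠ 0}) ≥ 1/(A·B). -/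

import Mathlib

open MeasureTheory

/-!
Reconstruction through a bounded kernel controls the coefficients of either family pointwise by the
`L¹` norm of the other, and a function bounded by `c` has `L¹` norm at most `c` times the measure of
its support. Going from one family to the other and back, `‖u‖₁ ≤ A ‖v‖₁ μ(supp u)` and
`‖v‖₁ ≤ B ‖u‖₁ ν(supp v)`, and it remains to cancel `‖u‖₁`, which is neither zero nor infinite.
-/

open Function
open scoped ENNReal

section Support

variable {Ω Δ : Type*} [MeasurableSpace Ω] [MeasurableSpace Δ] {μ : Measure Ω} {ν : Measure Δ}

theorem lintegral_le_mul_measure_support {u : Ω → ℝ≥0∞} {c : ℝ≥0∞} (hu : ∀ᵐ α ∂μ, u α ≤ c) :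
    ∫⁻ α, u α ∂μ ≤ c * μ (support u) := by
  have hind : ∀ᵐ α ∂μ, u α ≤ (support u).indicator (fun _ => c) α := by
    filter_upwards [hu] with α hα
    by_cases h0 : u α = 0
    · simp only [h0, zero_le]
    · rwa [Set.indicator_of_mem (mem_support.2 h0)]
  exact (lintegral_mono_ae hind).trans (lintegral_indicator_const_le _ _)

theorem inv_mul_le_measure_support_mul_measure_support {u : Ω → ℝ≥0∞} {v : Δ → ℝ≥0∞}
    {a b : ℝ≥0∞} (hu : ∀ᵐ α ∂μ, u α ≤ a * ∫⁻ β, v β ∂ν) (hv : ∀ᵐ β ∂ν, v β ≤ b * ∫⁻ α, u α ∂μ)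
    (hu_zero : ∫⁻ α, u α ∂μ ≠ 0) (hu_top : ∫⁻ α, u α ∂μ ≠ ∞) :
    (a * b)⁻¹ ≤ μ (support u) * ν (support v) := by
  have hround : 1 * ∫⁻ α, u α ∂μ ≤
      μ (support u) * ν (support v) * (a * b) * ∫⁻ α, u α ∂μ :=
    calc 1 * ∫⁻ α, u α ∂μ = ∫⁻ α, u α ∂μ := one_mul _
      _ ≤ a * (∫⁻ β, v β ∂ν) * μ (support u) := lintegral_le_mul_measure_support hu
      _ ≤ a * (b * (∫⁻ α, u α ∂μ) * ν (support v)) * μ (support u) := by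
        gcongr
        exact lintegral_le_mul_measure_support hv
      _ = μ (support u) * ν (support v) * (a * b) * ∫⁻ α, u α ∂μ := by ring
  rw [← one_div]
  exact ENNReal.div_le_of_le_mul ((ENNReal.mul_le_mul_iff_left hu_zero hu_top).1 hround)

end Support

theorem enorm_integral_smul_le_of_norm_le {R E Δ : Type*} [SeminormedRing R]
    [NormedAddCommGroup E] [NormedSpace ℝ E] [Module R E] [IsBoundedSMul R E] [MeasurableSpace Δ]
    {ν : Measure Δ} {v : Δ → R} {k : Δ → E} {A : ℝ} (hk : ∀ᵐ β ∂ν, ‖k β‖ ≤ A) :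
    ‖∫ β, v β • k β ∂ν‖ₑ ≤ ENNReal.ofReal A * ∫⁻ β, ‖v β‖ₑ ∂ν := by
  rw [← lintegral_const_mul' _ _ ENNReal.ofReal_ne_top]
  refine (enorm_integral_le_lintegral_enorm _).trans (lintegral_mono_ae ?_)
  filter_upwards [hk] with β hβ
  calc ‖v β • k β‖ₑ ≤ ‖v β‖ₑ * ‖k β‖ₑ := enorm_smul_le
    _ ≤ ‖v β‖ₑ * ENNReal.ofReal A := by
      rw [← ofReal_norm (k β)]
      gcongr
    _ = ENNReal.ofReal A * ‖v β‖ₑ := mul_comm _ _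

theorem unbounded_one_schauder_uncertainty_general
    {𝕜 Ω Δ : Type*} [RCLike 𝕜] [MeasurableSpace Ω] [MeasurableSpace Δ]
    {μ : Measure Ω} {ν : Measure Δ} {u : Ω → 𝕜} {v : Δ → 𝕜} {k : Ω → Δ → 𝕜} {l : Δ → Ω → 𝕜}
    {A B : ℝ}
    (hk : ∀ᵐ α ∂μ, ∀ᵐ β ∂ν, ‖k α β‖ ≤ A)
    (hl : ∀ᵐ β ∂ν, ∀ᵐ α ∂μ, ‖l β α‖ ≤ B)
    (hu_int : Integrable u μ)
    (hu_pos : 0 < ∫ α, ‖u α‖ ∂μ)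
    (hu : ∀ᵐ α ∂μ, Integrable (fun β => v β * k α β) ν ∧ u α = ∫ β, v β * k α β ∂ν)
    (hv : ∀ᵐ β ∂ν, Integrable (fun α => u α * l β α) μ ∧ v β = ∫ α, u α * l β α ∂μ) :
    (ENNReal.ofReal A * ENNReal.ofReal B)⁻¹ ≤ μ (support u) * ν (support v) := by
  have hu_le : ∀ᵐ α ∂μ, ‖u α‖ₑ ≤ ENNReal.ofReal A * ∫⁻ β, ‖v β‖ₑ ∂ν := by
    filter_upwards [hk, hu] with α hkα huα
    exact huα.2 ▸ enorm_integral_smul_le_of_norm_le hkα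
  have hv_le : ∀ᵐ β ∂ν, ‖v β‖ₑ ≤ ENNReal.ofReal B * ∫⁻ α, ‖u α‖ₑ ∂μ := by
    filter_upwards [hl, hv] with β hlβ hvβ
    exact hvβ.2 ▸ enorm_integral_smul_le_of_norm_le hlβ
  have hu_zero : ∫⁻ α, ‖u α‖ₑ ∂μ ≠ 0 := by
    rw [← ofReal_integral_norm_eq_lintegral_enorm hu_int]
    exact (ENNReal.ofReal_pos.2 hu_pos).ne'
  have hsupport := inv_mul_le_measure_support_mul_measure_support hu_le hv_le hu_zero hu_int.2.ne
  simpa only [support, ne_eq, enorm_eq_zero] using hsupport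

/-- **1-Unbounded Donoho-Stark-Elad-Bruckstein-Ricaud-Torrésani Uncertainty Principle.**
For unbounded continuous 1-Schauder frames `({f_α}, {τ_α})` and `({g_β}, {ω_β})` of a Banach
space `X`, applied at a fixed `x` in the intersection of the domains of the analysis operators,
`μ(supp θ_f x) · ν(supp θ_g x) ≥ 1/(A·B)` in `ℝ≥0∞`. -/
theorem unbounded_one_schauder_uncertainty
    {𝕜 X Ω Δ : Type*} [RCLike 𝕜]
    [NormedAddCommGroup X] [NormedSpace 𝕜 X] [CompleteSpace X]
    [MeasurableSpace Ω] [MeasurableSpace Δ]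
    (μ : Measure Ω) (ν : Measure Δ)
    (f : Ω → X →ₗ[𝕜] 𝕜) (g : Δ → X →ₗ[𝕜] 𝕜)
    (τ : Ω → X) (ω : Δ → X) (x : X)
    (A B : ℝ) (hA : 0 < A) (hB : 0 < B)
    (hfω : ∀ α β, ‖f α (ω β)‖ ≤ A)
    (hgτ : ∀ α β, ‖g β (τ α)‖ ≤ B)
    (hfint : Integrable (fun α => f α x) μ)
    (hfpos : 0 < ∫ α, ‖f α x‖ ∂μ)
    (hgint : Integrable (fun β => g β x) ν)
    (hgpos : 0 < ∫ β, ‖g β x‖ ∂ν)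
    (hrecf : ∀ α, Integrable (fun β => g β x * f α (ω β)) ν ∧
      f α x = ∫ β, g β x * f α (ω β) ∂ν)
    (hrecg : ∀ β, Integrable (fun α => f α x * g β (τ α)) μ ∧
      g β x = ∫ α, f α x * g β (τ α) ∂μ) :
    ENNReal.ofReal (1 / (A * B)) ≤ μ {α | f α x ≠ 0} * ν {β | g β x ≠ 0} := by
  rw [one_div, ENNReal.ofReal_inv_of_pos (mul_pos hA hB), ENNReal.ofReal_mul hA.le]
  exact unbounded_one_schauder_uncertainty_general (.of_forall fun α => .of_forall (hfω α))
    (.of_forall fun β => .of_forall (hgτ · β)) hfint hfpos (.of_forall hrecf) (.of_forall hrecg)
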